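/- Let φ, ψ : ℝ → ℝ be bounded C^1 functions with bounded derivatives, define H : P_1(ℝ)×ℝ → ℝ by H(m,x) := (φ(x) − ∫_ℝ φ dm) · (∫_ℝ ψ dm), and define F : P_1(ℝ) → ℝ by F(m) := ∫_0^1 ∫_ℝ H((1−t)δ_0 + t·m, x) d(m − δ_0)(x) dt. Then for every m ∈ P_1(ℝ): F(m) = (1/2)·(ψ(0) + ∫_ℝ ψ dm)·(∫_ℝ φ dm − φ(0)); moreover F is Fréchet-differentiable at every m ∈ P_1(ℝ) with canonical derivative δF(m,x) = (1/2)·(ψ(x) − ∫_ℝ ψ dm)·(∫_ℝ φ dm − φ(0)) + (1/2)·(ψ(0) + ∫_ℝ ψ dm)·(φ(x) − ∫_ℝ φ dm). -/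

import Mathlib

open MeasureTheory Filter Topology

noncomputable section

/-- `π` is a coupling of the measures `m` and `μ` on `ℝ`. -/
def IsCoupling (π : Measure (ℝ × ℝ)) (m μ : Measure ℝ) : Prop :=
  π.map Prod.fst = m ∧ π.map Prod.snd = μ

/-- The Wasserstein distance of order one between two measures on `ℝ`:
the infimum over couplings `π` of `∫ |x - y| dπ(x,y)`. -/
def W1 (m μ : Measure ℝ) : ℝ :=
  sInf {c : ℝ | ∃ π : Measure (ℝ × ℝ), IsCoupling π m μ ∧ c = ∫ p, |p.1 - p.2| ∂π}

/-- Membership in `P₁(ℝ)`: Borel probability measures on `ℝ` with finite first moment. -/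
def MemP1 (m : Measure ℝ) : Prop :=
  IsProbabilityMeasure m ∧ Integrable (fun x => |x|) m

/-- Membership in `P([-K,K])`: probability measures supported in `[-K,K]`. -/
def MemPK (K : ℝ) (m : Measure ℝ) : Prop :=
  IsProbabilityMeasure m ∧ m (Set.Icc (-K) K)ᶜ = 0

/-- The convex combination `(1-t)·m₀ + t·m` of two measures. -/
def lineSeg (m₀ m : Measure ℝ) (t : ℝ) : Measure ℝ :=
  ENNReal.ofReal (1 - t) • m₀ + ENNReal.ofReal t • m

/-- The integral of `f` against the signed difference `m - μ`:
`∫ f d(m - μ) = ∫ f dm - ∫ f dμ`. -/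
def dInt (f : ℝ → ℝ) (m μ : Measure ℝ) : ℝ := (∫ x, f x ∂m) - ∫ x, f x ∂μ

/-- `W₁`-(sequential) compactness of a subset of `P₁(ℝ)`. -/
def W1Compact (𝒦 : Set (Measure ℝ)) : Prop :=
  (∀ m ∈ 𝒦, MemP1 m) ∧
  ∀ u : ℕ → Measure ℝ, (∀ n, u n ∈ 𝒦) →
    ∃ m ∈ 𝒦, ∃ φ : ℕ → ℕ, StrictMono φ ∧
      Tendsto (fun n => W1 (u (φ n)) m) atTop (𝓝 0)

/-- Sublinearity in the real variable, uniformly over `W₁`-compact sets of measures. -/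
def SublinearOnCompacts (G : Measure ℝ → ℝ → ℝ) : Prop :=
  ∀ 𝒦 : Set (Measure ℝ), W1Compact 𝒦 →
    ∃ C > 0, ∀ m ∈ 𝒦, ∀ x : ℝ, |G m x| ≤ C * (1 + |x|)

/-- `W₁`-continuity of a function of the measure variable at a point of `P₁(ℝ)`. -/
def W1ContinuousAt (g : Measure ℝ → ℝ) (m : Measure ℝ) : Prop :=
  ∀ ε > 0, ∃ η > 0, ∀ μ, MemP1 μ → W1 μ m < η → |g μ - g m| < ε

/-- Joint continuity of `G : P₁(ℝ) × ℝ → ℝ`. -/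
def JointlyContinuous (G : Measure ℝ → ℝ → ℝ) : Prop :=
  ∀ m x, MemP1 m → ∀ ε > 0, ∃ η > 0, ∀ μ y, MemP1 μ →
    W1 μ m < η → |y - x| < η → |G μ y - G m x| < ε

/-- Joint continuity of `G : P₁(ℝ) × ℝ × ℝ → ℝ`. -/
def JointlyContinuous2 (G : Measure ℝ → ℝ → ℝ → ℝ) : Prop :=
  ∀ m x y, MemP1 m → ∀ ε > 0, ∃ η > 0, ∀ μ x' y', MemP1 μ →
    W1 μ m < η → |x' - x| < η → |y' - y| < η → |G μ x' y' - G m x y| < ε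

/-- `H` is a version of the (linear functional) derivative of `F : P₁(ℝ) → ℝ`. -/
def IsDerivVersion (F : Measure ℝ → ℝ) (H : Measure ℝ → ℝ → ℝ) : Prop :=
  Measurable (Function.uncurry H) ∧
  SublinearOnCompacts H ∧
  ∀ m m₀, MemP1 m → MemP1 m₀ →
    F m - F m₀ = ∫ t in (0:ℝ)..1, dInt (H (lineSeg m₀ m t)) m m₀

/-- `H` is the canonical derivative of `F : P₁(ℝ) → ℝ`: the version of the derivative
satisfying `∫ H(μ,x) dμ(x) = 0` for every `μ ∈ P₁(ℝ)`. -/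
def IsCanonicalDeriv (F : Measure ℝ → ℝ) (H : Measure ℝ → ℝ → ℝ) : Prop :=
  IsDerivVersion F H ∧ ∀ μ, MemP1 μ → ∫ x, H μ x ∂μ = 0

/-- `G : P₁(ℝ) × ℝ → ℝ` is of class `C^{0,1}`. -/
def IsC01 (G : Measure ℝ → ℝ → ℝ) : Prop :=
  (∀ m, MemP1 m → ContDiff ℝ 1 (G m)) ∧
  (∀ x : ℝ, ∀ m, MemP1 m → W1ContinuousAt (fun μ => G μ x) m) ∧
  SublinearOnCompacts G ∧
  JointlyContinuous (fun m x => deriv (G m) x)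

/-- `F : P₁(ℝ) → ℝ` is of class `C¹` with canonical derivative `H`. -/
def IsC1 (F : Measure ℝ → ℝ) (H : Measure ℝ → ℝ → ℝ) : Prop :=
  IsCanonicalDeriv F H ∧ IsC01 H

/-- Joint continuity on `P([-K,K]) × [-K,K]`. -/
def JointlyContinuousOnK (K : ℝ) (G : Measure ℝ → ℝ → ℝ) : Prop :=
  ∀ m x, MemPK K m → x ∈ Set.Icc (-K) K → ∀ ε > 0, ∃ η > 0,
    ∀ μ y, MemPK K μ → y ∈ Set.Icc (-K) K → W1 μ m < η → |y - x| < η →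
      |G μ y - G m x| < ε

/-- Joint continuity on `P([-K,K]) × [-K,K]²`. -/
def JointlyContinuousOnK2 (K : ℝ) (G : Measure ℝ → ℝ → ℝ → ℝ) : Prop :=
  ∀ m x y, MemPK K m → x ∈ Set.Icc (-K) K → y ∈ Set.Icc (-K) K → ∀ ε > 0, ∃ η > 0,
    ∀ μ x' y', MemPK K μ → x' ∈ Set.Icc (-K) K → y' ∈ Set.Icc (-K) K →
      W1 μ m < η → |x' - x| < η → |y' - y| < η → |G μ x' y' - G m x y| < ε

end

/-- `F : P₁(ℝ) → ℝ` is Fréchet-differentiable at `m₀ ∈ P₁(ℝ)` with canonical derivative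
`H : ℝ → ℝ`: `∫ H dm₀ = 0` and `F(m) = F(m₀) + ∫ H d(m-m₀) + o(W₁(m,m₀))`. -/
def FrechetDiffAtP1 (F : Measure ℝ → ℝ) (m₀ : Measure ℝ) (H : ℝ → ℝ) : Prop :=
  (∫ x, H x ∂m₀ = 0) ∧
  ∀ ε > (0:ℝ), ∃ η > (0:ℝ), ∀ m, MemP1 m → W1 m m₀ < η →
    |F m - F m₀ - dInt H m m₀| ≤ ε * W1 m m₀

/-- The function `H(m,x) = (φ(x) - ∫ φ dm)·(∫ ψ dm)` of the counter-example. -/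
noncomputable def Hex (φ ψ : ℝ → ℝ) (m : Measure ℝ) (x : ℝ) : ℝ :=
  (φ x - ∫ y, φ y ∂m) * ∫ y, ψ y ∂m

/-- The function `F(m) = ∫₀¹ ∫ H((1-t)δ₀ + t·m, x) d(m - δ₀)(x) dt`. -/
noncomputable def Fex (φ ψ : ℝ → ℝ) (m : Measure ℝ) : ℝ :=
  ∫ t in (0:ℝ)..1, dInt (Hex φ ψ (lineSeg (Measure.dirac 0) m t)) m (Measure.dirac 0)

lemma aux_lip (f : ℝ → ℝ) (hf : ContDiff ℝ 1 f) (C : ℝ) (hC : ∀ x, |deriv f x| ≤ C) (x y : ℝ) :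
    |f x - f y| ≤ C * |x - y| := by
  have := Convex.norm_image_sub_le_of_norm_deriv_le (f := f) (C := C) (s := Set.univ) (x := y)
    (y := x) (fun z _ => (hf.differentiable (by norm_num)) z) (fun z _ => hC z) convex_univ
    (Set.mem_univ _) (Set.mem_univ _)
  simpa [Real.norm_eq_abs] using this

lemma aux_int (f : ℝ → ℝ) (hf : ContDiff ℝ 1 f) (hb : ∃ C : ℝ, ∀ x, |f x| ≤ C)
    (m : Measure ℝ) [IsFiniteMeasure m] : Integrable f m := by
  obtain ⟨C, hC⟩ := hb
  exact Integrable.of_bound hf.continuous.aestronglyMeasurable C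
    (Eventually.of_forall (fun x => hC x))

lemma aux_W1_nonneg (m μ : Measure ℝ) : 0 ≤ W1 m μ := by
  apply Real.sInf_nonneg
  rintro c ⟨π, _, rfl⟩
  exact integral_nonneg (fun p => abs_nonneg _)

lemma aux_W1 (f : ℝ → ℝ) (hf : ContDiff ℝ 1 f) (hb : ∃ C : ℝ, ∀ x, |f x| ≤ C)
    (C : ℝ) (hC : 0 < C) (hC' : ∀ x, |deriv f x| ≤ C) (m μ : Measure ℝ) (hm : MemP1 m)
    (hμ : MemP1 μ) : |(∫ x, f x ∂m) - ∫ x, f x ∂μ| ≤ C * W1 m μ := by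
  obtain ⟨hm1, hm2⟩ := hm
  obtain ⟨hμ1, hμ2⟩ := hμ
  suffices h : |(∫ x, f x ∂m) - ∫ x, f x ∂μ| / C ≤ W1 m μ by
    rw [div_le_iff₀ hC] at h
    linarith
  apply le_csInf
  · exact ⟨_, m.prod μ, ⟨by simp, by simp⟩, rfl⟩
  · rintro c ⟨π, ⟨h1, h2⟩, rfl⟩
    have hfi := aux_int f hf hb m
    have hfi2 := aux_int f hf hb μ
    subst h1
    subst h2
    rw [integrable_map_measure (by fun_prop) (by fun_prop)] at hm2 hμ2
    rw [integrable_map_measure hf.continuous.aestronglyMeasurable (by fun_prop)] at hfi hfi2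
    rw [integral_map (by fun_prop) hf.continuous.aestronglyMeasurable,
      integral_map (by fun_prop) hf.continuous.aestronglyMeasurable]
    have hd : Integrable (fun p : ℝ × ℝ => |p.1 - p.2|) π := by
      refine (hm2.add hμ2).mono' (by fun_prop) (Eventually.of_forall fun p => ?_)
      simp only [Real.norm_eq_abs, abs_abs]
      exact abs_sub p.1 p.2
    replace hfi : Integrable (fun p : ℝ × ℝ => f p.1) π := hfi
    replace hfi2 : Integrable (fun p : ℝ × ℝ => f p.2) π := hfi2
    rw [div_le_iff₀ hC, ← integral_sub hfi hfi2, mul_comm, ← integral_const_mul]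
    refine (abs_integral_le_integral_abs).trans ?_
    exact integral_mono (hfi.sub hfi2).abs (hd.const_mul C)
      (fun p => aux_lip f hf C hC' p.1 p.2)

lemma aux_seg (f : ℝ → ℝ) (hf : ContDiff ℝ 1 f) (hb : ∃ C : ℝ, ∀ x, |f x| ≤ C)
    (m : Measure ℝ) [IsProbabilityMeasure m] (t : ℝ) (ht : t ∈ Set.Icc (0:ℝ) 1) :
    ∫ y, f y ∂(lineSeg (Measure.dirac 0) m t) = (1 - t) * f 0 + t * ∫ y, f y ∂m := by
  unfold lineSeg
  have h1 := (aux_int f hf hb (Measure.dirac 0)).smul_measure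
    (ENNReal.ofReal_ne_top (r := 1 - t))
  have h2 := (aux_int f hf hb m).smul_measure (ENNReal.ofReal_ne_top (r := t))
  rw [integral_add_measure h1 h2, integral_smul_measure, integral_smul_measure,
    ENNReal.toReal_ofReal (by linarith [ht.2]), ENNReal.toReal_ofReal ht.1, integral_dirac]
  simp

lemma aux_F (φ ψ : ℝ → ℝ) (hφ : ContDiff ℝ 1 φ) (hψ : ContDiff ℝ 1 ψ)
    (hφb : ∃ C : ℝ, ∀ x, |φ x| ≤ C) (hψb : ∃ C : ℝ, ∀ x, |ψ x| ≤ C)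
    (m : Measure ℝ) (hm : MemP1 m) :
    Fex φ ψ m = (1/2) * (ψ 0 + ∫ y, ψ y ∂m) * ((∫ y, φ y ∂m) - φ 0) := by
  obtain ⟨hm1, hm2⟩ := hm
  have hfi := aux_int φ hφ hφb m
  unfold Fex
  have key : ∀ t ∈ Set.uIcc (0:ℝ) 1,
      dInt (Hex φ ψ (lineSeg (Measure.dirac 0) m t)) m (Measure.dirac 0)
        = ((∫ y, φ y ∂m) - φ 0) * (ψ 0 + t * ((∫ y, ψ y ∂m) - ψ 0)) := by
    intro t ht
    rw [Set.uIcc_of_le zero_le_one] at ht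
    unfold dInt Hex
    rw [aux_seg ψ hψ hψb m t ht, aux_seg φ hφ hφb m t ht, integral_dirac, integral_mul_const,
      integral_sub hfi (integrable_const _), integral_const]
    simp
    ring
  rw [intervalIntegral.integral_congr key, intervalIntegral.integral_const_mul,
    intervalIntegral.integral_add (by simp)
      (Continuous.intervalIntegrable (by fun_prop) _ _),
    intervalIntegral.integral_mul_const]
  simp
  ring

lemma aux_H (φ ψ : ℝ → ℝ) (a b c d : ℝ) (m : Measure ℝ) [IsProbabilityMeasure m]
    (h1 : Integrable φ m) (h2 : Integrable ψ m) :
    ∫ x, ((1/2) * (ψ x - b) * c + (1/2) * d * (φ x - a)) ∂m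
      = (1/2) * ((∫ x, ψ x ∂m) - b) * c + (1/2) * d * ((∫ x, φ x ∂m) - a) := by
  have i1 : Integrable (fun x => ψ x - b) m := h2.sub (integrable_const _)
  have i2 : Integrable (fun x => φ x - a) m := h1.sub (integrable_const _)
  rw [integral_add ((i1.const_mul _).mul_const _) (i2.const_mul _), integral_mul_const,
    integral_const_mul, integral_const_mul, integral_sub h2 (integrable_const _),
    integral_sub h1 (integrable_const _)]
  simp

/-- the counter-example, Example in Appendix A: with
`H(m,x) = (φ(x) - ∫ φ dm)·(∫ ψ dm)`, the function
`F(m) = ∫₀¹ ∫ H((1-t)δ₀ + t·m, x) d(m-δ₀)(x) dt` equals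
`(1/2)(ψ(0) + ∫ ψ dm)(∫ φ dm - φ(0))`, and is Fréchet-differentiable with canonical
derivative
`δF(m,x) = (1/2)(ψ(x) - ∫ ψ dm)(∫ φ dm - φ(0)) + (1/2)(ψ(0) + ∫ ψ dm)(φ(x) - ∫ φ dm)`. -/
theorem stmt16 (φ ψ : ℝ → ℝ) (hφ : ContDiff ℝ 1 φ) (hψ : ContDiff ℝ 1 ψ)
    (hφb : ∃ C : ℝ, ∀ x, |φ x| ≤ C) (hφb' : ∃ C : ℝ, ∀ x, |deriv φ x| ≤ C)
    (hψb : ∃ C : ℝ, ∀ x, |ψ x| ≤ C) (hψb' : ∃ C : ℝ, ∀ x, |deriv ψ x| ≤ C) :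
    ∀ m, MemP1 m →
      Fex φ ψ m = (1/2) * (ψ 0 + ∫ y, ψ y ∂m) * ((∫ y, φ y ∂m) - φ 0) ∧
      FrechetDiffAtP1 (Fex φ ψ) m
        (fun x => (1/2) * (ψ x - ∫ y, ψ y ∂m) * ((∫ y, φ y ∂m) - φ 0) +
          (1/2) * (ψ 0 + ∫ y, ψ y ∂m) * (φ x - ∫ y, φ y ∂m)) := by
  intro m hm
  refine ⟨aux_F φ ψ hφ hψ hφb hψb m hm, ?_, ?_⟩
  · have := hm.1
    rw [aux_H _ _ _ _ _ _ m (aux_int φ hφ hφb m) (aux_int ψ hψ hψb m)]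
    ring
  · obtain ⟨A, hA⟩ := hφb'
    obtain ⟨B, hB⟩ := hψb'
    have hA0 : 0 < |A| + 1 := by positivity
    have hB0 : 0 < |B| + 1 := by positivity
    intro ε hε
    refine ⟨ε / ((|A| + 1) * (|B| + 1)), by positivity, fun μ hμ hW => ?_⟩
    have := hm.1
    have := hμ.1
    have e1 := aux_W1 φ hφ hφb (|A| + 1) hA0
      (fun x => (hA x).trans (by linarith [le_abs_self A])) μ m hμ hm
    have e2 := aux_W1 ψ hψ hψb (|B| + 1) hB0
      (fun x => (hB x).trans (by linarith [le_abs_self B])) μ m hμ hm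
    have hW0 := aux_W1_nonneg μ m
    rw [lt_div_iff₀ (by positivity)] at hW
    unfold dInt
    rw [aux_F φ ψ hφ hψ hφb hψb m hm, aux_F φ ψ hφ hψ hφb hψb μ hμ,
      aux_H _ _ _ _ _ _ m (aux_int φ hφ hφb m) (aux_int ψ hψ hψb m),
      aux_H _ _ _ _ _ _ μ (aux_int φ hφ hφb μ) (aux_int ψ hψ hψb μ)]
    generalize (∫ x, φ x ∂m) = a at *
    generalize (∫ x, φ x ∂μ) = a' at *
    generalize (∫ x, ψ x ∂m) = b at *
    generalize (∫ x, ψ x ∂μ) = b' at *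
    generalize W1 μ m = w at *
    have e : (1/2) * (ψ 0 + b') * (a' - φ 0) - (1/2) * (ψ 0 + b) * (a - φ 0)
        - ((1/2) * (b' - b) * (a - φ 0) + (1/2) * (ψ 0 + b) * (a' - a)
          - ((1/2) * (b - b) * (a - φ 0) + (1/2) * (ψ 0 + b) * (a - a)))
        = (1/2) * ((a' - a) * (b' - b)) := by ring
    rw [e, abs_mul, abs_mul, abs_of_pos (by norm_num : (0:ℝ) < 1/2)]
    have h3 : |a' - a| * |b' - b| ≤ ((|A| + 1) * w) * ((|B| + 1) * w) :=
      mul_le_mul e1 e2 (abs_nonneg _) (by positivity)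
    have h4 : (w * ((|A| + 1) * (|B| + 1))) * w ≤ ε * w :=
      mul_le_mul_of_nonneg_right hW.le hW0
    have h5 : 0 ≤ |a' - a| * |b' - b| := by positivity
    nlinarith
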